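/- arXiv:1408.5797 — 2 statements merged into one kernel-verified Lean document; each statement's English description precedes it below -/
import Mathlib

section
/- Let F ⊆ Sym²(ℝⁿ) be an ST-invariant cone subequation with finite Riesz characteristic. (i) If u is F-subharmonic on the annulus A(a, b) = {x ∈ ℝⁿ : a < |x| < b} (0 ≤ a < b), then the radial function x ↦ M(u, |x|), where M(u, t) = sup_{|y| = t} u(y), is F-subharmonic on A(a, b). (ii) If u is F-subharmonic on the ball {x : |x| < R}, then in addition t ↦ M(u, t) is nondecreasing on [0, R). -/
open Set Filter Topology Matrix

noncomputable section

abbrev EucSp (n : ℕ) := EuclideanSpace ℝ (Fin n)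

/-- The rank-one orthogonal projection matrix `P_e = e eᵀ` associated to a vector `e`. -/
def projMat {n : ℕ} (e : EucSp n) : Matrix (Fin n) (Fin n) ℝ :=
  Matrix.of fun i j => e i * e j

/-- A (pure second-order, constant coefficient) subequation: a closed set of symmetric
matrices satisfying positivity `F + 𝒫 ⊆ F`. -/
def IsSubequation {n : ℕ} (F : Set (Matrix (Fin n) (Fin n) ℝ)) : Prop :=
  (∀ A ∈ F, A.IsSymm) ∧ IsClosed F ∧
    ∀ A ∈ F, ∀ P : Matrix (Fin n) (Fin n) ℝ, P.PosSemidef → A + P ∈ F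

/-- A cone subequation. -/
def IsConeSubequation {n : ℕ} (F : Set (Matrix (Fin n) (Fin n) ℝ)) : Prop :=
  IsSubequation F ∧ ∀ A ∈ F, ∀ t : ℝ, 0 ≤ t → t • A ∈ F

/-- `F` is invariant under a closed subgroup of `O(n)` acting transitively on the
unit sphere. -/
def STInvariant {n : ℕ} (F : Set (Matrix (Fin n) (Fin n) ℝ)) : Prop :=
  ∃ G : Set (Matrix (Fin n) (Fin n) ℝ),
    IsClosed G ∧
    G ⊆ (Matrix.orthogonalGroup (Fin n) ℝ : Set (Matrix (Fin n) (Fin n) ℝ)) ∧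
    (1 : Matrix (Fin n) (Fin n) ℝ) ∈ G ∧
    (∀ g ∈ G, ∀ h ∈ G, g * h ∈ G) ∧
    (∀ g ∈ G, g⁻¹ ∈ G) ∧
    (∀ x y : EucSp n, ‖x‖ = 1 → ‖y‖ = 1 → ∃ g ∈ G, Matrix.toEuclideanLin g x = y) ∧
    (∀ g ∈ G, ∀ A ∈ F, gᵀ * A * g ∈ F)

/-- The interior of `F` relative to the subspace `Sym²(ℝⁿ)` of symmetric matrices. -/
def symInterior {n : ℕ} (F : Set (Matrix (Fin n) (Fin n) ℝ)) :
    Set (Matrix (Fin n) (Fin n) ℝ) :=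
  {A | ∃ U ∈ 𝓝 A, ∀ B ∈ U, B.IsSymm → B ∈ F}

/-- The frontier of `F` relative to the subspace `Sym²(ℝⁿ)` of symmetric matrices. -/
def symFrontier {n : ℕ} (F : Set (Matrix (Fin n) (Fin n) ℝ)) :
    Set (Matrix (Fin n) (Fin n) ℝ) :=
  closure F \ symInterior F

/-- `F` has finite (increasing) Riesz characteristic `p`:
`P_{e⊥} − (p−1) P_e ∈ ∂F` for every unit vector `e`. -/
def HasRieszChar {n : ℕ} (F : Set (Matrix (Fin n) (Fin n) ℝ)) (p : ℝ) : Prop :=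
  1 ≤ p ∧ ∀ e : EucSp n, ‖e‖ = 1 →
    ((1 : Matrix (Fin n) (Fin n) ℝ) - projMat e) - (p - 1) • projMat e ∈ symFrontier F

/-- `F` has finite decreasing Riesz characteristic `q`:
`−P_{e⊥} + (q−1) P_e ∈ ∂F` for every unit vector `e`. -/
def HasDualRieszChar {n : ℕ} (F : Set (Matrix (Fin n) (Fin n) ℝ)) (q : ℝ) : Prop :=
  1 ≤ q ∧ ∀ e : EucSp n, ‖e‖ = 1 →
    -((1 : Matrix (Fin n) (Fin n) ℝ) - projMat e) + (q - 1) • projMat e ∈ symFrontier F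

/-- The Hessian matrix of a function `φ : ℝⁿ → ℝ` at `x`. -/
def hess {n : ℕ} (φ : EucSp n → ℝ) (x : EucSp n) : Matrix (Fin n) (Fin n) ℝ :=
  Matrix.of fun i j =>
    iteratedFDeriv ℝ 2 φ x ![EuclideanSpace.single i (1 : ℝ), EuclideanSpace.single j (1 : ℝ)]

/-- `u` is `F`-subharmonic (a viscosity subsolution) on `X`. -/
def IsFSubharmonicOn {n : ℕ} (F : Set (Matrix (Fin n) (Fin n) ℝ))
    (X : Set (EucSp n)) (u : EucSp n → EReal) : Prop :=
  UpperSemicontinuousOn u X ∧ (∀ x ∈ X, u x < ⊤) ∧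
    ∀ x₀ ∈ X, ∀ φ : EucSp n → ℝ, ContDiffAt ℝ 2 φ x₀ →
      (∀ᶠ x in 𝓝[X] x₀, u x ≤ ((φ x : ℝ) : EReal)) → u x₀ = ((φ x₀ : ℝ) : EReal) →
      hess φ x₀ ∈ F

/-- The dual subequation `F̃ = {A : −A ∉ Int F}` (interior relative to `Sym²(ℝⁿ)`). -/
def dualSubeq {n : ℕ} (F : Set (Matrix (Fin n) (Fin n) ℝ)) :
    Set (Matrix (Fin n) (Fin n) ℝ) :=
  {A | A.IsSymm ∧ -A ∉ symInterior F}

/-- `u` is `F`-harmonic on `X`: `u` is `F`-subharmonic and `−u` is `F̃`-subharmonic. -/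
def IsFHarmonicOn {n : ℕ} (F : Set (Matrix (Fin n) (Fin n) ℝ))
    (X : Set (EucSp n)) (u : EucSp n → ℝ) : Prop :=
  IsFSubharmonicOn F X (fun x => ((u x : ℝ) : EReal)) ∧
  IsFSubharmonicOn (dualSubeq F) X (fun x => ((-(u x) : ℝ) : EReal))

/-- The Riesz kernel `K_p`. -/
def rieszKernel (p t : ℝ) : ℝ :=
  if p < 2 then t ^ (2 - p) else if p = 2 then Real.log t else -(t ^ (2 - p))

/-- The spherical maximum `M(u, t) = sup_{|y| = t} u(y)`. -/
def sphSup {n : ℕ} (u : EucSp n → EReal) (t : ℝ) : EReal :=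
  sSup (u '' {y : EucSp n | ‖y‖ = t})

theorem hess_apply' {n : ℕ} (φ : EucSp n → ℝ) (x : EucSp n) (i j : Fin n) :
    hess φ x i j = fderiv ℝ (fderiv ℝ φ) x (EuclideanSpace.single i (1 : ℝ))
      (EuclideanSpace.single j (1 : ℝ)) := by
  simp [hess, iteratedFDeriv_two_apply]

theorem orth_norm {n : ℕ} {g : Matrix (Fin n) (Fin n) ℝ}
    (hg : gᵀ * g = 1) (x : EucSp n) : ‖Matrix.toEuclideanLin g x‖ = ‖x‖ := by
  have h : ‖Matrix.toEuclideanLin g x‖ ^ 2 = ‖x‖ ^ 2 := by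
    rw [EuclideanSpace.norm_sq_eq, EuclideanSpace.norm_sq_eq]
    have e1 : ∀ v : Fin n → ℝ, ∑ i, ‖v i‖ ^ 2 = v ⬝ᵥ v := by
      intro v
      simp [dotProduct, sq]
    have h1 := e1 (g *ᵥ x.ofLp)
    have h2 := e1 x.ofLp
    have h3 : (g *ᵥ x.ofLp) ⬝ᵥ (g *ᵥ x.ofLp) = x.ofLp ⬝ᵥ x.ofLp := by
      rw [Matrix.dotProduct_mulVec, Matrix.vecMul_mulVec, hg, ← Matrix.dotProduct_mulVec,
        Matrix.one_mulVec]
    rw [h2, ← h3, ← h1]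
    rfl
  exact (pow_left_inj₀ (norm_nonneg _) (norm_nonneg _) two_ne_zero).1 h

theorem hess_comp {n : ℕ} {g : Matrix (Fin n) (Fin n) ℝ}
    (φ : EucSp n → ℝ) (y : EucSp n)
    (hφ : ContDiffAt ℝ 2 φ (Matrix.toEuclideanLin g y)) :
    hess (fun z => φ (Matrix.toEuclideanLin g z)) y
      = gᵀ * hess φ (Matrix.toEuclideanLin g y) * g := by
  set L : EucSp n →L[ℝ] EucSp n := LinearMap.toContinuousLinearMap (Matrix.toEuclideanLin g)
    with hL
  have hLv : ∀ z, Matrix.toEuclideanLin g z = L z := fun z => rfl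
  have hLs : ∀ i, L (EuclideanSpace.single i (1 : ℝ))
      = ∑ k, g k i • EuclideanSpace.single k (1 : ℝ) := by
    intro i
    ext k
    rw [← hLv]
    simp [Matrix.toLpLin_apply, Finset.sum_apply, Pi.single_apply]
  simp only [hLv] at hφ ⊢
  have h1 : fderiv ℝ (fun z => φ (L z)) =ᶠ[𝓝 y] fun z => (fderiv ℝ φ (L z)).comp L := by
    have h2 : ∀ᶠ x in 𝓝 (L y), ContDiffAt ℝ 2 φ x := hφ.eventually (by simp)
    filter_upwards [L.continuous.continuousAt.eventually h2] with z hz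
    have := fderiv_comp z (hz.differentiableAt (by simp)) L.differentiableAt
    rw [L.fderiv] at this
    exact this
  have hd : DifferentiableAt ℝ (fderiv ℝ φ) (L y) :=
    (hφ.fderiv_right (m := 1) (by norm_num)).differentiableAt (by simp)
  have h3 : HasFDerivAt (fun z => (fderiv ℝ φ (L z)).comp L)
      (((ContinuousLinearMap.compL ℝ (EucSp n) (EucSp n) ℝ).flip L).comp
        ((fderiv ℝ (fderiv ℝ φ) (L y)).comp L)) y := by
    exact ((ContinuousLinearMap.compL ℝ (EucSp n) (EucSp n) ℝ).flip L).hasFDerivAt.comp y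
      (hd.hasFDerivAt.comp y L.hasFDerivAt)
  ext i j
  rw [hess_apply', h1.fderiv_eq, h3.fderiv]
  simp only [ContinuousLinearMap.comp_apply, ContinuousLinearMap.flip_apply,
    ContinuousLinearMap.compL_apply, hLs, map_sum, map_smul, Matrix.mul_apply,
    Matrix.transpose_apply, hess_apply', _root_.sum_apply,
    _root_.smul_apply, smul_eq_mul, Finset.sum_mul, Finset.mul_sum]
  rw [Finset.sum_comm]
  refine Finset.sum_congr rfl fun k _ => Finset.sum_congr rfl fun l _ => ?_
  ring

theorem hess_quad {n : ℕ} (c ε : ℝ) (x : EucSp n) :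
    hess (fun z => c - ε * ‖z‖ ^ 2) x = (-(2 * ε)) • (1 : Matrix (Fin n) (Fin n) ℝ) := by
  have h1 : fderiv ℝ (fun z : EucSp n => c - ε * ‖z‖ ^ 2)
      = fun z => (-(2 * ε)) • innerSL ℝ z := by
    funext z
    have h := ((hasStrictFDerivAt_norm_sq z).hasFDerivAt.const_mul ε).const_sub c
    rw [h.fderiv]
    ext w
    simp
    ring
  ext i j
  rw [hess_apply', h1]
  have h2 : HasFDerivAt (fun z : EucSp n => (-(2 * ε)) • innerSL ℝ z)
      ((-(2 * ε)) • innerSL ℝ (E := EucSp n)) x :=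
    ContinuousLinearMap.hasFDerivAt
      ((-(2 * ε)) • innerSL ℝ (E := EucSp n) : EucSp n →L[ℝ] EucSp n →L[ℝ] ℝ)
  rw [h2.fderiv]
  change (-(2 * ε)) * inner ℝ (EuclideanSpace.single i (1 : ℝ) : EucSp n)
    (EuclideanSpace.single j (1 : ℝ)) = (-(2 * ε)) * (1 : Matrix (Fin n) (Fin n) ℝ) i j
  congr 1
  simp [Matrix.one_apply, EuclideanSpace.inner_single_left, Pi.single_apply]

theorem exists_norm_eq' {n : ℕ} (hn : 1 ≤ n) (t : ℝ) (ht : 0 ≤ t) :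
    ∃ y : EucSp n, ‖y‖ = t :=
  ⟨EuclideanSpace.single ⟨0, hn⟩ t, by simp [abs_of_nonneg ht]⟩

theorem le_sphSup {n : ℕ} (u : EucSp n → EReal) (t : ℝ) (y : EucSp n) (hy : ‖y‖ = t) :
    u y ≤ sphSup u t :=
  le_sSup ⟨y, hy, rfl⟩

theorem sphSup_attained {n : ℕ} (hn : 1 ≤ n) {X : Set (EucSp n)} {u : EucSp n → EReal}
    (hu : UpperSemicontinuousOn u X) {t : ℝ} (ht : 0 ≤ t)
    (hX : ∀ y : EucSp n, ‖y‖ = t → y ∈ X) : ∃ y : EucSp n, ‖y‖ = t ∧ sphSup u t = u y := by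
  have hc : IsCompact {y : EucSp n | ‖y‖ = t} := by
    have := isCompact_sphere (0 : EucSp n) t
    have h2 : {y : EucSp n | ‖y‖ = t} = Metric.sphere (0 : EucSp n) t := by
      ext y
      simp
    rwa [h2]
  obtain ⟨y, hy, hm⟩ := UpperSemicontinuousOn.exists_isMaxOn
    (exists_norm_eq' hn t ht) hc (hu.mono hX)
  refine ⟨y, hy, le_antisymm ?_ (le_sSup ⟨y, hy, rfl⟩)⟩
  apply sSup_le
  rintro _ ⟨z, hz, rfl⟩
  exact hm hz

theorem part_one {n : ℕ} (hn : 1 ≤ n)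
    (F : Set (Matrix (Fin n) (Fin n) ℝ)) (hST : STInvariant F)
    (a b : ℝ) (ha : 0 ≤ a) (u : EucSp n → EReal)
    (hu : IsFSubharmonicOn F {x : EucSp n | a < ‖x‖ ∧ ‖x‖ < b} u) :
    IsFSubharmonicOn F {x : EucSp n | a < ‖x‖ ∧ ‖x‖ < b} (fun x => sphSup u ‖x‖) := by
  obtain ⟨husc, htop, htest⟩ := hu
  have hopen : IsOpen {x : EucSp n | a < ‖x‖ ∧ ‖x‖ < b} :=
    (isOpen_lt continuous_const continuous_norm).inter (isOpen_lt continuous_norm continuous_const)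
  have hatt : ∀ x ∈ {x : EucSp n | a < ‖x‖ ∧ ‖x‖ < b},
      ∃ y : EucSp n, ‖y‖ = ‖x‖ ∧ sphSup u ‖x‖ = u y := by
    intro x hx
    refine sphSup_attained hn husc (norm_nonneg x) ?_
    intro y hy
    simpa [hy] using hx
  refine ⟨?_, ?_, ?_⟩
  · intro x₀ hx₀ c hc
    have key : ∀ᶠ x in 𝓝 x₀, ∀ e ∈ Metric.sphere (0 : EucSp n) 1, u (‖x‖ • e) < c := by
      apply (isCompact_sphere (0 : EucSp n) 1).eventually_forall_of_forall_eventually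
      intro e he
      have he' : ‖e‖ = 1 := by simpa using he
      have hn1 : ‖‖x₀‖ • e‖ = ‖x₀‖ := by rw [norm_smul, he']; simp
      have hmem : ‖x₀‖ • e ∈ {x : EucSp n | a < ‖x‖ ∧ ‖x‖ < b} := by
        simpa only [mem_ofPred_eq, hn1] using hx₀
      have hlt : u (‖x₀‖ • e) < c := lt_of_le_of_lt (le_sphSup u _ _ hn1) hc
      have h1 := husc _ hmem c hlt
      rw [hopen.nhdsWithin_eq hmem] at h1
      have hcont : ContinuousAt (fun z : EucSp n × EucSp n => ‖z.1‖ • z.2) (x₀, e) := by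
        fun_prop
      exact hcont.eventually h1
    filter_upwards [nhdsWithin_le_nhds key, self_mem_nhdsWithin] with x hx hxX
    obtain ⟨y, hy, hyu⟩ := hatt x hxX
    have hpos : 0 < ‖x‖ := lt_of_le_of_lt ha hxX.1
    have := hx (‖x‖⁻¹ • y) (by simp [norm_smul, hy, hpos.ne'])
    rw [smul_smul, mul_inv_cancel₀ hpos.ne', one_smul] at this
    show sphSup u ‖x‖ < c
    rw [hyu]
    exact this
  · intro x hx
    obtain ⟨y, hy, hyu⟩ := hatt x hx
    show sphSup u ‖x‖ < ⊤
    rw [hyu]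
    exact htop y (by simpa [hy] using hx)
  · intro x₀ hx₀ φ hφ hle heq
    obtain ⟨G, -, hGO, -, -, hinv, htrans, hGF⟩ := hST
    obtain ⟨y₀, hy₀, hyu⟩ := hatt x₀ hx₀
    have hy₀X : y₀ ∈ {x : EucSp n | a < ‖x‖ ∧ ‖x‖ < b} := by
      simpa only [mem_ofPred_eq, hy₀] using hx₀
    have hpos : 0 < ‖x₀‖ := lt_of_le_of_lt ha hx₀.1
    obtain ⟨g, hg, hgx⟩ := htrans (‖x₀‖⁻¹ • y₀) (‖x₀‖⁻¹ • x₀)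
      (by simp [norm_smul, hy₀, hpos.ne']) (by simp [norm_smul, hpos.ne'])
    have hgy : Matrix.toEuclideanLin g y₀ = x₀ := by
      rw [map_smul] at hgx
      exact smul_right_injective _ (inv_ne_zero hpos.ne') hgx
    have ho1 : g * gᵀ = 1 := (Matrix.mem_orthogonalGroup_iff _ _).1 (hGO hg)
    have ho2 : gᵀ * g = 1 := (Matrix.mem_orthogonalGroup_iff' _ _).1 (hGO hg)
    have hginv : g⁻¹ = gᵀ := Matrix.inv_eq_right_inv ho1
    have hφ' : ContDiffAt ℝ 2 φ (Matrix.toEuclideanLin g y₀) := by rwa [hgy]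
    have hlin : ContDiff ℝ 2 (fun z : EucSp n => Matrix.toEuclideanLin g z) :=
      (LinearMap.toContinuousLinearMap (Matrix.toEuclideanLin g)).contDiff
    have hmem := htest y₀ hy₀X (fun z => φ (Matrix.toEuclideanLin g z))
      (hφ'.comp y₀ hlin.contDiffAt) ?_ ?_
    · rw [hess_comp φ y₀ hφ', hgy] at hmem
      have h5 := hGF _ (hinv g hg) _ hmem
      rw [hginv, Matrix.transpose_transpose] at h5
      have h6 : g * (gᵀ * hess φ x₀ * g) * gᵀ = (g * gᵀ) * hess φ x₀ * (g * gᵀ) := by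
        simp only [Matrix.mul_assoc]
      rw [h6, ho1, Matrix.one_mul, Matrix.mul_one] at h5
      exact h5
    · rw [hopen.nhdsWithin_eq hx₀, ← hgy] at hle
      refine nhdsWithin_le_nhds ?_
      filter_upwards [hlin.continuous.continuousAt.eventually hle] with z hz
      refine le_trans ?_ hz
      rw [orth_norm ho2]
      exact le_sSup ⟨z, rfl, rfl⟩
    · simp only [hgy]
      rw [← hyu]
      exact heq

theorem cone_absurd {n : ℕ} (hn : 1 ≤ n)
    (F : Set (Matrix (Fin n) (Fin n) ℝ))
    (hF : IsConeSubequation F) (hchar : ∃ p : ℝ, HasRieszChar F p) (ε : ℝ) (hε : 0 < ε)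
    (h : (-ε) • (1 : Matrix (Fin n) (Fin n) ℝ) ∈ F) : False := by
  obtain ⟨p, -, hp⟩ := hchar
  obtain ⟨e, he⟩ := exists_norm_eq' hn 1 zero_le_one
  refine (hp e he).2 ⟨univ, univ_mem, fun B _ hB => ?_⟩
  obtain ⟨c, hc0, hc⟩ : ∃ c : ℝ, 0 ≤ c ∧ (B + c • (1 : Matrix (Fin n) (Fin n) ℝ)).PosSemidef := by
    refine ⟨∑ i, ∑ j, |B i j|, by positivity, ?_⟩
    apply Matrix.PosSemidef.of_dotProduct_mulVec_nonneg
    · rw [Matrix.IsHermitian, Matrix.conjTranspose_eq_transpose_of_trivial, Matrix.transpose_add,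
        Matrix.transpose_smul, Matrix.transpose_one, hB.eq]
    · intro x
      have hS : ∀ i, x i ^ 2 ≤ ∑ k, x k ^ 2 := fun i =>
        Finset.single_le_sum (f := fun k => x k ^ 2) (fun k _ => sq_nonneg _) (Finset.mem_univ i)
      have h1 : star x ⬝ᵥ ((B + (∑ i, ∑ j, |B i j|) • (1 : Matrix (Fin n) (Fin n) ℝ)) *ᵥ x)
          = ∑ i, ∑ j, (x i * B i j * x j + |B i j| * ∑ k, x k ^ 2) := by
        rw [Matrix.add_mulVec, dotProduct_add, Matrix.smul_mulVec, Matrix.one_mulVec,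
          dotProduct_smul]
        simp only [Finset.sum_add_distrib, ← Finset.sum_mul, smul_eq_mul]
        congr 1
        · simp [dotProduct, Matrix.mulVec, Finset.mul_sum, mul_assoc]
        · simp [dotProduct, sq]
      rw [h1]
      refine Finset.sum_nonneg fun i _ => Finset.sum_nonneg fun j _ => ?_
      have h2 : |x i * x j| ≤ ∑ k, x k ^ 2 := by
        rw [abs_le]
        constructor <;> nlinarith [hS i, hS j, sq_nonneg (x i + x j), sq_nonneg (x i - x j)]
      have h3 : |x i * B i j * x j| ≤ |B i j| * ∑ k, x k ^ 2 := by
        have : x i * B i j * x j = B i j * (x i * x j) := by ring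
        rw [this, abs_mul]
        exact mul_le_mul_of_nonneg_left h2 (abs_nonneg _)
      linarith [neg_abs_le (x i * B i j * x j)]
  have h1 := hF.2 _ h (c / ε) (by positivity)
  have h2 := hF.1.2.2 _ h1 _ hc
  have h3 : (c / ε) • (-ε) • (1 : Matrix (Fin n) (Fin n) ℝ) = -(c • 1) := by
    rw [smul_smul, ← neg_smul]
    congr 1
    field_simp
  rw [h3] at h2
  simpa using h2

theorem part_two {n : ℕ} (hn : 1 ≤ n)
    (F : Set (Matrix (Fin n) (Fin n) ℝ))
    (hF : IsConeSubequation F) (hchar : ∃ p : ℝ, HasRieszChar F p)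
    (R : ℝ) (u : EucSp n → EReal)
    (hu : IsFSubharmonicOn F {x : EucSp n | ‖x‖ < R} u) :
    MonotoneOn (sphSup u) (Set.Ico 0 R) := by
  obtain ⟨husc, htop, htest⟩ := hu
  have hopen : IsOpen {x : EucSp n | ‖x‖ < R} := isOpen_lt continuous_norm continuous_const
  intro s hs t ht hst
  by_contra hlt
  rw [not_le] at hlt
  have hst' : s < t := lt_of_le_of_ne hst (by rintro rfl; exact lt_irrefl _ hlt)
  obtain ⟨c, hc1, hc2⟩ := EReal.lt_iff_exists_real_btwn.1 hlt
  obtain ⟨x₁, hx₁, hux₁⟩ := sphSup_attained hn husc hs.1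
    (fun y hy => by rw [mem_ofPred_eq, hy]; exact hs.2)
  rw [hux₁] at hc2
  have hx₁X : x₁ ∈ {x : EucSp n | ‖x‖ < R} := by rw [mem_ofPred_eq, hx₁]; exact hs.2
  obtain ⟨m, hm⟩ : ∃ m : ℝ, u x₁ = (m : EReal) :=
    ⟨(u x₁).toReal, (EReal.coe_toReal (htop x₁ hx₁X).ne (ne_bot_of_gt hc2)).symm⟩
  rw [hm] at hc2
  have hcm : c < m := by exact_mod_cast hc2
  have htpos : 0 < t := lt_of_le_of_lt hs.1 hst'
  set ε : ℝ := (m - c) / (2 * t ^ 2) with hε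
  have hεpos : 0 < ε := div_pos (by linarith) (by positivity)
  have hεt : ε * t ^ 2 < m - c := by
    have : ε * t ^ 2 = (m - c) / 2 := by rw [hε]; field_simp
    linarith
  have hsub : Metric.closedBall (0 : EucSp n) t ⊆ {x : EucSp n | ‖x‖ < R} := by
    intro y hy
    have : ‖y‖ ≤ t := by simpa using hy
    exact lt_of_le_of_lt this ht.2
  have husc2 : UpperSemicontinuousOn (fun x => u x + ((ε * ‖x‖ ^ 2 : ℝ) : EReal))
      (Metric.closedBall (0 : EucSp n) t) := by
    refine UpperSemicontinuousOn.add' (husc.mono hsub) ?_ ?_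
    · apply ContinuousOn.upperSemicontinuousOn
      apply Continuous.continuousOn
      exact continuous_coe_real_ereal.comp (by fun_prop)
    · intro x _
      exact EReal.continuousAt_add (Or.inr (EReal.coe_ne_bot _)) (Or.inr (EReal.coe_ne_top _))
  obtain ⟨x₀, hx₀, hmax⟩ := UpperSemicontinuousOn.exists_isMaxOn
    ⟨x₁, by simpa [hx₁] using hst⟩ (isCompact_closedBall (0 : EucSp n) t) husc2
  have hmax' : ∀ x ∈ Metric.closedBall (0 : EucSp n) t,
      u x + ((ε * ‖x‖ ^ 2 : ℝ) : EReal) ≤ u x₀ + ((ε * ‖x₀‖ ^ 2 : ℝ) : EReal) :=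
    fun x hx => hmax hx
  have h1 := hmax' x₁ (by simpa [hx₁] using hst)
  have hbot : u x₀ ≠ ⊥ := by
    intro h
    rw [h, hm, EReal.bot_add, ← EReal.coe_add] at h1
    exact EReal.coe_ne_bot _ (le_bot_iff.1 h1)
  obtain ⟨r, hr⟩ : ∃ r : ℝ, u x₀ = (r : EReal) :=
    ⟨(u x₀).toReal, (EReal.coe_toReal (htop x₀ (hsub hx₀)).ne hbot).symm⟩
  rw [hr, hm, ← EReal.coe_add, ← EReal.coe_add, EReal.coe_le_coe_iff] at h1
  have hx₀le : ‖x₀‖ ≤ t := by simpa using hx₀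
  have hx₀lt : ‖x₀‖ < t := by
    refine lt_of_le_of_ne hx₀le fun h => ?_
    have h2 : u x₀ < c := lt_of_le_of_lt (le_sphSup u _ _ h) hc1
    rw [hr] at h2
    have h3 : r < c := by exact_mod_cast h2
    rw [h] at h1
    have : 0 ≤ ε * ‖x₁‖ ^ 2 := by positivity
    linarith
  have hfin := htest x₀ (hsub hx₀) (fun z => (r + ε * ‖x₀‖ ^ 2) - ε * ‖z‖ ^ 2)
    (contDiffAt_const.sub (contDiffAt_const.mul (contDiff_norm_sq ℝ).contDiffAt)) ?_ ?_
  · rw [hess_quad] at hfin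
    exact cone_absurd hn F hF hchar (2 * ε) (by positivity) hfin
  · refine nhdsWithin_le_nhds ?_
    have : ∀ᶠ x : EucSp n in 𝓝 x₀, ‖x‖ < t :=
      (isOpen_lt continuous_norm continuous_const).mem_nhds hx₀lt
    filter_upwards [this] with x hx
    have h4 := hmax' x (by simpa using hx.le)
    rw [hr, ← EReal.coe_add] at h4
    rw [EReal.coe_sub]
    exact (EReal.le_sub_iff_add_le (Or.inl (EReal.coe_ne_bot _))
      (Or.inl (EReal.coe_ne_top _))).2 h4
  · rw [hr]
    congr 1
    ring

/-- (i) The spherical maximum of an `F`-subharmonic function on an annulus is a radial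
`F`-subharmonic function there; (ii) on a ball it is moreover nondecreasing in the radius. -/
theorem stmt9 (n : ℕ) (hn : 1 ≤ n)
    (F : Set (Matrix (Fin n) (Fin n) ℝ))
    (hF : IsConeSubequation F) (hST : STInvariant F)
    (hchar : ∃ p : ℝ, HasRieszChar F p) :
    (∀ a b : ℝ, 0 ≤ a → a < b → ∀ u : EucSp n → EReal,
      IsFSubharmonicOn F {x : EucSp n | a < ‖x‖ ∧ ‖x‖ < b} u →
      IsFSubharmonicOn F {x : EucSp n | a < ‖x‖ ∧ ‖x‖ < b} (fun x => sphSup u ‖x‖)) ∧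
    (∀ R : ℝ, 0 < R → ∀ u : EucSp n → EReal,
      IsFSubharmonicOn F {x : EucSp n | ‖x‖ < R} u →
      MonotoneOn (sphSup u) (Set.Ico 0 R)) := by
  exact ⟨fun a b ha _ u hu => part_one hn F hST a b ha u hu,
    fun R _ u hu => part_two hn F hF hchar R u hu⟩

end
end

section
/- Let F ⊆ Sym²(ℝⁿ) be an ST-invariant cone subequation with finite Riesz characteristic p, and let u be F-subharmonic on an open set X ⊆ ℝⁿ with u not identically −∞ on any ball contained in X. For x ∈ X and small t ≥ 0 set M(u, x, t) = sup_{|y−x| ≤ t} u. Then for each x ∈ X the density Θ^M(u, x) = lim_{0<s<t, t→0} (M(u, x, t) − M(u, x, s))/(K_p(t) − K_p(s)) exists and lies in [0, ∞), and the function x ↦ Θ^M(u, x) is upper semicontinuous on X; equivalently, for every c > 0 the set E_c = {x ∈ X : Θ^M(u, x) ≥ c} is closed in X. -/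
open Set Filter Topology Matrix

noncomputable section

/-- The ball maximum `M(u, x, t) = sup_{|y − x| ≤ t} u(y)`. -/
def ballSup {n : ℕ} (u : EucSp n → EReal) (x : EucSp n) (t : ℝ) : EReal :=
  sSup (u '' Metric.closedBall x t)


lemma hess_radial {n : ℕ} (x y0 : EucSp n) (G G' : ℝ → ℝ) (G'' : ℝ)
    (h1 : ∀ᶠ τ in 𝓝 (‖y0 - x‖ ^ 2), HasDerivAt G (G' τ) τ)
    (h2 : HasDerivAt G' G'' (‖y0 - x‖ ^ 2)) :
    hess (fun y => G (‖y - x‖ ^ 2)) y0 =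
      (2 * G' (‖y0 - x‖ ^ 2)) • (1 : Matrix (Fin n) (Fin n) ℝ) +
        (4 * G'') • projMat (y0 - x) := by
  have hq : ∀ y : EucSp n, HasFDerivAt (fun y => ‖y - x‖ ^ 2)
      ((2 : ℝ) • (innerSL ℝ (y - x))) y := by
    intro y
    have := ((hasFDerivAt_id (𝕜 := ℝ) y).sub_const x).norm_sq
    refine HasFDerivAt.congr_fderiv (f := fun y => ‖y - x‖ ^ 2) this ?_
    ext v
    simp [two_smul, two_mul]
  have hcont : Tendsto (fun y : EucSp n => ‖y - x‖ ^ 2) (𝓝 y0) (𝓝 (‖y0 - x‖ ^ 2)) :=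
    (hq y0).continuousAt
  have hfd : (fderiv ℝ (fun y => G (‖y - x‖ ^ 2))) =ᶠ[𝓝 y0]
      fun y => (2 * G' (‖y - x‖ ^ 2)) • innerSL ℝ (y - x) := by
    filter_upwards [hcont.eventually h1] with y hy
    have := (hy.comp_hasFDerivAt y (hq y)).fderiv
    rw [show (fun y => G (‖y - x‖ ^ 2)) = G ∘ (fun y => ‖y - x‖ ^ 2) from rfl, this, smul_smul,
      mul_comm]
  have hA : HasFDerivAt (fun y : EucSp n => 2 * G' (‖y - x‖ ^ 2))
      ((2 * G'') • ((2 : ℝ) • (innerSL ℝ (y0 - x)))) y0 :=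
    HasDerivAt.comp_hasFDerivAt (h₂ := fun τ => 2 * G' τ) (f := fun y : EucSp n => ‖y - x‖ ^ 2)
      y0 (h2.const_mul 2) (hq y0)
  have hB : HasFDerivAt (fun y : EucSp n => innerSL ℝ (y - x)) (innerSL ℝ (E := EucSp n)) y0 :=
    (innerSL ℝ (E := EucSp n)).hasFDerivAt.comp y0 ((hasFDerivAt_id (𝕜 := ℝ) y0).sub_const x)
  have hC := (hA.smul hB).fderiv
  ext i j
  simp only [hess, Matrix.of_apply, iteratedFDeriv_two_apply, hfd.fderiv_eq]
  erw [hC]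
  simp [projMat, Matrix.one_apply, EuclideanSpace.inner_single_left,
    EuclideanSpace.inner_single_right]
  have hin : (innerSL ℝ (E := EucSp n) (EuclideanSpace.single i 1)) (EuclideanSpace.single j 1) =
      if i = j then (1 : ℝ) else 0 := by
    rw [innerSL_apply_apply, EuclideanSpace.inner_single_left]
    simp [Pi.single_apply]
  have hin2 : 2 * G' (‖y0 - x‖ ^ 2) * (innerSL ℝ (E := EucSp n) (EuclideanSpace.single i 1))
      (EuclideanSpace.single j 1) = 2 * G' (‖y0 - x‖ ^ 2) * if i = j then (1 : ℝ) else 0 := by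
    rw [hin]
  by_cases h : i = j
  · subst h
    simp only [if_true] at hin2 ⊢
    linear_combination hin2
  · simp only [h, if_false] at hin2 ⊢
    linear_combination hin2

lemma kernel_aux (p : ℝ) : ∃ (G : ℝ → ℝ) (c : ℝ), 0 < c ∧
    (∀ ρ : ℝ, 0 < ρ → rieszKernel p ρ = G (ρ ^ 2)) ∧
    (∀ τ : ℝ, 0 < τ → HasDerivAt G (c * τ ^ (-p / 2)) τ) ∧
    (∀ τ : ℝ, 0 < τ → ContDiffAt ℝ 2 G τ) := by
  have hpow : ∀ ρ : ℝ, 0 < ρ → ρ ^ (2 - p) = (ρ ^ 2) ^ ((2 - p) / 2) := by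
    intro ρ hρ
    rw [← Real.rpow_natCast, ← Real.rpow_mul hρ.le]
    congr 1; push_cast; ring
  have hexp : (2 - p) / 2 - 1 = - p / 2 := by ring
  rcases lt_trichotomy p 2 with h | h | h
  · refine ⟨fun τ => τ ^ ((2 - p) / 2), (2 - p) / 2, by linarith, ?_, ?_, ?_⟩
    · intro ρ hρ; simp [rieszKernel, h, hpow ρ hρ]
    · intro τ hτ
      have := Real.hasDerivAt_rpow_const (x := τ) (p := (2 - p) / 2) (Or.inl hτ.ne')
      rwa [hexp] at this
    · intro τ hτ
      exact Real.contDiffAt_rpow_const_of_ne hτ.ne'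
  · subst h
    refine ⟨fun τ => (1 / 2) * Real.log τ, 1 / 2, by norm_num, ?_, ?_, ?_⟩
    · intro ρ hρ; simp [rieszKernel]
    · intro τ hτ
      have := (Real.hasDerivAt_log hτ.ne').const_mul (1 / 2)
      rwa [show -(2 : ℝ) / 2 = -1 by norm_num, Real.rpow_neg_one]
    · intro τ hτ
      exact contDiffAt_const.mul (Real.contDiffAt_log.2 hτ.ne')
  · refine ⟨fun τ => - τ ^ ((2 - p) / 2), (p - 2) / 2, by linarith, ?_, ?_, ?_⟩
    · intro ρ hρ; simp [rieszKernel, h.not_gt, h.ne', hpow ρ hρ]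
    · intro τ hτ
      have := (Real.hasDerivAt_rpow_const (x := τ) (p := (2 - p) / 2) (Or.inl hτ.ne')).neg
      rw [hexp] at this
      refine HasDerivAt.congr_deriv this ?_
      ring
    · intro τ hτ
      exact (Real.contDiffAt_rpow_const_of_ne hτ.ne').neg

lemma kernel_mono (p : ℝ) : StrictMonoOn (rieszKernel p) (Ioi 0) := by
  obtain ⟨G, c, hc, hK, hG, -⟩ := kernel_aux p
  have hm : StrictMonoOn G (Ioi 0) := by
    apply strictMonoOn_of_deriv_pos (convex_Ioi 0)
    · intro τ hτ; exact (hG τ hτ).continuousAt.continuousWithinAt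
    · intro τ hτ
      rw [interior_Ioi] at hτ
      rw [(hG τ hτ).deriv]
      have : (0 : ℝ) < τ := hτ
      positivity
  intro a ha b hb hab
  have ha' : (0 : ℝ) < a := ha
  have hb' : (0 : ℝ) < b := hb
  rw [hK a ha, hK b hb]
  exact hm (by simp; positivity) (by simp; positivity) (by gcongr)

lemma kernel_cont (p : ℝ) {t : ℝ} (ht : 0 < t) : ContinuousAt (rieszKernel p) t := by
  obtain ⟨G, c, hc, hK, hG, -⟩ := kernel_aux p
  have h1 : ContinuousAt (fun ρ : ℝ => G (ρ ^ 2)) t :=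
    ContinuousAt.comp (f := fun ρ : ℝ => ρ ^ 2) (hG (t ^ 2) (by positivity)).continuousAt
      (by fun_prop)
  refine h1.congr ?_
  filter_upwards [lt_mem_nhds ht] with ρ hρ
  exact (hK ρ hρ).symm

/-- A symmetric matrix all of whose entries are small, added to a positive multiple of the
identity, is positive semidefinite. -/
lemma posSemidef_nhds {n : ℕ} (A : Matrix (Fin n) (Fin n) ℝ) (ε : ℝ) (hε : 0 < ε) :
    ∃ U ∈ 𝓝 A, ∀ B ∈ U, (B - A).IsSymm → (B - (A - ε • (1 : Matrix _ _ ℝ))).PosSemidef := by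
  have hS : {B : Matrix (Fin n) (Fin n) ℝ | ∀ i j, |(B - A) i j| < ε / (n + 1)} ∈ 𝓝 A := by
    have hcont : ∀ i j, Continuous (fun B : Matrix (Fin n) (Fin n) ℝ => |(B - A) i j|) := by
      intro i j
      simp only [Matrix.sub_apply]
      exact ((continuous_id.matrix_elem i j).sub continuous_const).abs
    have : ∀ᶠ B in 𝓝 A, ∀ i j, |(B - A) i j| < ε / (n + 1) := by
      rw [eventually_all]; intro i
      rw [eventually_all]; intro j
      apply (hcont i j).continuousAt.eventually_lt_const
      simp; positivity
    exact this
  refine ⟨_, hS, fun B hB hsymm => ?_⟩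
  set C := B - A with hC
  have e : B - (A - ε • (1 : Matrix (Fin n) (Fin n) ℝ)) = C + ε • 1 := by rw [hC]; abel
  rw [e]
  refine Matrix.PosSemidef.of_dotProduct_mulVec_nonneg ?_ ?_
  · have h1 : (C + ε • (1 : Matrix (Fin n) (Fin n) ℝ))ᵀ = C + ε • 1 := by
      rw [Matrix.transpose_add, hsymm, Matrix.transpose_smul, Matrix.transpose_one]
    rw [Matrix.IsHermitian, Matrix.conjTranspose_eq_transpose_of_trivial, h1]
  · intro v
    have h1 : star v ⬝ᵥ ((C + ε • (1 : Matrix (Fin n) (Fin n) ℝ)) *ᵥ v) =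
        ∑ i, ∑ j, v i * (C i j * v j) + ε * ∑ i, v i ^ 2 := by
      rw [Matrix.add_mulVec, Matrix.smul_mulVec, Matrix.one_mulVec, dotProduct_add]
      simp [dotProduct, Matrix.mulVec, Finset.mul_sum]
      apply Finset.sum_congr rfl; intros; ring
    rw [h1]
    have h2 : ∀ i j, -(ε / (n + 1) * ((v i ^ 2 + v j ^ 2) / 2)) ≤ v i * (C i j * v j) := by
      intro i j
      have h3 := (hB i j).le
      have h4 : |v i * v j| ≤ (v i ^ 2 + v j ^ 2) / 2 := by
        rw [abs_le]; constructor <;> nlinarith [sq_nonneg (v i - v j), sq_nonneg (v i + v j)]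
      have h5 : |v i * (C i j * v j)| ≤ ε / (n + 1) * ((v i ^ 2 + v j ^ 2) / 2) := by
        rw [show v i * (C i j * v j) = C i j * (v i * v j) by ring, abs_mul]
        exact mul_le_mul h3 h4 (abs_nonneg _) (by positivity)
      exact (abs_le.1 h5).1
    have h6 : ∑ i, ∑ j, -(ε / (n + 1) * ((v i ^ 2 + v j ^ 2) / 2)) ≤
        ∑ i, ∑ j, v i * (C i j * v j) :=
      Finset.sum_le_sum fun i _ => Finset.sum_le_sum fun j _ => h2 i j
    have h7 : ∑ i : Fin n, ∑ j : Fin n, -(ε / (n + 1) * ((v i ^ 2 + v j ^ 2) / 2)) =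
        -(ε / (n + 1) * (n * ∑ i, v i ^ 2)) := by
      simp only [Finset.sum_neg_distrib, ← Finset.mul_sum, ← Finset.sum_div,
        Finset.sum_add_distrib, Finset.sum_const, Finset.card_univ, Fintype.card_fin,
        nsmul_eq_mul]
      ring
    have h8 : 0 ≤ ∑ i, v i ^ 2 := Finset.sum_nonneg fun i _ => sq_nonneg _
    have h9 : ε / (n + 1) * (n * ∑ i, v i ^ 2) ≤ ε * ∑ i, v i ^ 2 := by
      rw [div_mul_eq_mul_div, div_le_iff₀ (by positivity)]
      nlinarith [mul_nonneg hε.le h8]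
    linarith

lemma not_mem_of_char {n : ℕ} {p : ℝ} {F : Set (Matrix (Fin n) (Fin n) ℝ)}
    (hF : IsConeSubequation F) (hchar : HasRieszChar F p) (e : EucSp n) (he : ‖e‖ = 1)
    (l ε : ℝ) (hl : 0 < l) (hε : 0 < ε) :
    l • ((1 : Matrix (Fin n) (Fin n) ℝ) - p • projMat e) - ε • (1 : Matrix _ _ ℝ) ∉ F := by
  intro hmem
  have h0 := (hchar.2 e he).2
  have hH : ((1 : Matrix (Fin n) (Fin n) ℝ) - projMat e) - (p - 1) • projMat e =
      1 - p • projMat e := by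
    rw [sub_smul, one_smul]; abel
  rw [hH] at h0
  set H := (1 : Matrix (Fin n) (Fin n) ℝ) - p • projMat e with hHdef
  have h1 := hF.2 _ hmem l⁻¹ (by positivity)
  rw [smul_sub, smul_smul, smul_smul, inv_mul_cancel₀ hl.ne', one_smul] at h1
  obtain ⟨U, hU, hU2⟩ := posSemidef_nhds H (l⁻¹ * ε) (by positivity)
  refine h0 ⟨U, hU, fun B hB hBs => ?_⟩
  have hHs : H.IsSymm := by
    rw [hHdef]
    ext i j
    simp [projMat, Matrix.one_apply, eq_comm, mul_comm]
  have := hF.1.2.2 _ h1 _ (hU2 B hB (hBs.sub hHs))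
  simpa using this

lemma annulus_comparison {n : ℕ} {p : ℝ} {F : Set (Matrix (Fin n) (Fin n) ℝ)}
    (hF : IsConeSubequation F) (hchar : HasRieszChar F p)
    {X : Set (EucSp n)} {u : EucSp n → EReal} (hu : IsFSubharmonicOn F X u)
    (x : EucSp n) (r t a b ε : ℝ) (hr : 0 < r) (hb : 0 < b) (hε : 0 < ε)
    (hX : Metric.closedBall x t ⊆ X)
    (hin : ∀ y, ‖y - x‖ = r → u y ≤ ((a + b * rieszKernel p r : ℝ) : EReal))
    (hout : ∀ y, ‖y - x‖ = t → u y ≤ ((a + b * rieszKernel p t : ℝ) : EReal))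
    (y : EucSp n) (hy1 : r ≤ ‖y - x‖) (hy2 : ‖y - x‖ ≤ t) :
    u y ≤ ((a + b * rieszKernel p ‖y - x‖ + ε * (t ^ 2 - ‖y - x‖ ^ 2) : ℝ) : EReal) := by
  obtain ⟨G, c, hc, hK, hG, hG2⟩ := kernel_aux p
  set g : ℝ → ℝ := fun τ => a + b * G τ + ε * (t ^ 2 - τ) with hg
  set φ : EucSp n → ℝ := fun y => g (‖y - x‖ ^ 2) with hφ
  have hφK : ∀ z, 0 < ‖z - x‖ →
      φ z = a + b * rieszKernel p ‖z - x‖ + ε * (t ^ 2 - ‖z - x‖ ^ 2) := by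
    intro z hz; simp only [hφ, hg, hK _ hz]
  have hgC : ∀ τ, 0 < τ → ContDiffAt ℝ 2 g τ := by
    intro τ hτ
    exact (contDiffAt_const.add (contDiffAt_const.mul (hG2 τ hτ))).add
      (contDiffAt_const.mul (contDiffAt_const.sub contDiffAt_id))
  have hφC : ∀ z, 0 < ‖z - x‖ → ContDiffAt ℝ 2 φ z := by
    intro z hz
    exact ContDiffAt.comp z (f := fun y : EucSp n => ‖y - x‖ ^ 2) (hgC _ (by positivity))
      ((contDiffAt_id.sub contDiffAt_const).norm_sq ℝ)
  rw [← hφK y (by linarith)]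
  by_contra hlt
  rw [not_le] at hlt
  set A : Set (EucSp n) := {z | r ≤ ‖z - x‖} ∩ Metric.closedBall x t with hA
  have hcomp : IsCompact A :=
    (isCompact_closedBall x t).inter_left (isClosed_le continuous_const (by fun_prop))
  have hyA : y ∈ A := ⟨hy1, by simpa [dist_eq_norm] using hy2⟩
  have hAX : A ⊆ X := fun z hz => hX hz.2
  have husc : UpperSemicontinuousOn (fun z => u z + ((-φ z : ℝ) : EReal)) A := by
    apply UpperSemicontinuousOn.add' (hu.1.mono hAX)
    · apply ContinuousOn.upperSemicontinuousOn
      apply continuous_coe_real_ereal.comp_continuousOn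
      intro z hz
      exact (hφC z (lt_of_lt_of_le hr hz.1)).continuousAt.neg.continuousWithinAt
    · intro z hz
      apply EReal.continuousAt_add <;> simp
  obtain ⟨z, hzA, hz⟩ := husc.exists_isMaxOn ⟨y, hyA⟩ hcomp
  have hz0 : 0 < ‖z - x‖ := lt_of_lt_of_le hr hzA.1
  have hzt : ‖z - x‖ ≤ t := by simpa [dist_eq_norm] using hzA.2
  have hpos : (0 : EReal) < u z + ((-φ z : ℝ) : EReal) := by
    refine lt_of_lt_of_le ?_ (hz hyA)
    have := EReal.add_lt_add_right_coe hlt (-φ y)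
    rw [← EReal.coe_add] at this
    simpa using this
  have htop : u z ≠ ⊤ := (hu.2.1 z (hAX hzA)).ne
  have hbot : u z ≠ ⊥ := by
    intro h; rw [h] at hpos; simp at hpos
  obtain ⟨w, hw⟩ : ∃ w : ℝ, u z = w := ⟨(u z).toReal, (EReal.coe_toReal htop hbot).symm⟩
  have hwpos : φ z < w := by
    rw [hw, ← EReal.coe_add] at hpos
    have : (0 : ℝ) < w + -φ z := by exact_mod_cast hpos
    linarith
  have hzr' : ‖z - x‖ ≠ r := by
    intro h
    have h1 := hin z h
    rw [hw, EReal.coe_le_coe_iff] at h1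
    rw [hφK z hz0, h] at hwpos
    have : r ≤ t := h ▸ hzt
    nlinarith [mul_nonneg hε.le (sub_nonneg.2 (pow_le_pow_left₀ hr.le this 2))]
  have hzt' : ‖z - x‖ ≠ t := by
    intro h
    have h1 := hout z h
    rw [hw, EReal.coe_le_coe_iff] at h1
    rw [hφK z hz0, h] at hwpos
    nlinarith
  have hzr2 : r < ‖z - x‖ := lt_of_le_of_ne hzA.1 (Ne.symm hzr')
  have hzt2 : ‖z - x‖ < t := lt_of_le_of_ne hzt hzt'
  -- the test function
  set g2 : ℝ → ℝ := fun τ => g τ + (w - φ z) with hg2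
  have hmem : hess (fun y => g2 (‖y - x‖ ^ 2)) z ∈ F := by
    apply hu.2.2 z (hAX hzA)
    · exact (hφC z hz0).add contDiffAt_const
    · apply Filter.Eventually.filter_mono nhdsWithin_le_nhds
      have hc1 : ContinuousAt (fun y : EucSp n => ‖y - x‖) z := by fun_prop
      filter_upwards [hc1.eventually_const_lt hzr2, hc1.eventually_lt_const hzt2] with v hv1 hv2
      have hvA : v ∈ A := ⟨hv1.le, by simpa [dist_eq_norm] using hv2.le⟩
      have h1 : u v + ((-φ v : ℝ) : EReal) ≤ u z + ((-φ z : ℝ) : EReal) := hz hvA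
      have h2 := add_le_add_left h1 ((φ v : ℝ) : EReal)
      rw [add_assoc, ← EReal.coe_add, hw, ← EReal.coe_add, ← EReal.coe_add] at h2
      simp only [neg_add_cancel, EReal.coe_zero, add_zero] at h2
      refine h2.trans (le_of_eq ?_)
      congr 1
      simp only [hg2, hφ]; ring
    · rw [hw]; congr 1; simp only [hg2, hφ]; ring
  set τ0 := ‖z - x‖ ^ 2 with hτ0
  have hτpos : 0 < τ0 := by positivity
  rw [hess_radial x z g2 (fun τ => b * (c * τ ^ (-p / 2)) - ε)
    (b * (c * ((-p / 2) * τ0 ^ (-p / 2 - 1)))) ?_ ?_] at hmem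
  · set e : EucSp n := (‖z - x‖⁻¹ : ℝ) • (z - x) with he
    have hen : ‖e‖ = 1 := by
      rw [he, norm_smul, norm_inv, norm_norm, inv_mul_cancel₀ hz0.ne']
    refine not_mem_of_char hF hchar e hen (2 * (b * (c * τ0 ^ (-p / 2)))) (2 * ε)
      (by positivity) (by positivity) ?_
    convert hmem using 1
    have hproj : projMat (z - x) = τ0 • projMat e := by
      ext i j
      simp only [projMat, he, Matrix.of_apply, Matrix.smul_apply, hτ0, PiLp.smul_apply,
        smul_eq_mul]
      field_simp
    have hpw : τ0 ^ (-p / 2 - 1) * τ0 = τ0 ^ (-p / 2) := by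
      rw [← Real.rpow_add_one hτpos.ne']; congr 1; ring
    rw [hproj, smul_smul, ← hτ0, ← hpw]
    ext i j
    simp only [Matrix.sub_apply, Matrix.add_apply, Matrix.smul_apply, smul_eq_mul]
    ring
  · filter_upwards [lt_mem_nhds hτpos] with τ hτ
    have h1 := (((hG τ hτ).const_mul b).const_add a).add
      (((hasDerivAt_id τ).const_sub (t ^ 2)).const_mul ε)
    have h2 := h1.add_const (w - φ z)
    refine HasDerivAt.congr_deriv h2 ?_
    ring
  · have h1 := (((Real.hasDerivAt_rpow_const (x := τ0) (p := -p / 2)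
      (Or.inl hτpos.ne')).const_mul c).const_mul b).sub_const ε
    exact h1

lemma annulus_comparison' {n : ℕ} {p : ℝ} {F : Set (Matrix (Fin n) (Fin n) ℝ)}
    (hF : IsConeSubequation F) (hchar : HasRieszChar F p)
    {X : Set (EucSp n)} {u : EucSp n → EReal} (hu : IsFSubharmonicOn F X u)
    (x : EucSp n) (r t a b : ℝ) (hr : 0 < r) (hb : 0 < b)
    (hX : Metric.closedBall x t ⊆ X)
    (hin : ∀ y, ‖y - x‖ = r → u y ≤ ((a + b * rieszKernel p r : ℝ) : EReal))
    (hout : ∀ y, ‖y - x‖ = t → u y ≤ ((a + b * rieszKernel p t : ℝ) : EReal))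
    (y : EucSp n) (hy1 : r ≤ ‖y - x‖) (hy2 : ‖y - x‖ ≤ t) :
    u y ≤ ((a + b * rieszKernel p ‖y - x‖ : ℝ) : EReal) := by
  have ht : Tendsto (fun ε : ℝ => ((a + b * rieszKernel p ‖y - x‖ +
      ε * (t ^ 2 - ‖y - x‖ ^ 2) : ℝ) : EReal)) (𝓝[>] 0)
      (𝓝 ((a + b * rieszKernel p ‖y - x‖ : ℝ) : EReal)) := by
    apply (continuous_coe_real_ereal.tendsto _).comp
    have : Continuous (fun ε : ℝ => a + b * rieszKernel p ‖y - x‖ +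
      ε * (t ^ 2 - ‖y - x‖ ^ 2)) := by fun_prop
    have h := this.tendsto 0
    simp only [zero_mul, add_zero] at h
    exact h.mono_left nhdsWithin_le_nhds
  refine ge_of_tendsto ht ?_
  filter_upwards [self_mem_nhdsWithin] with ε hε
  exact annulus_comparison hF hchar hu x r t a b ε hr hb hε hX hin hout y hy1 hy2

lemma ballSup_mono {n : ℕ} (u : EucSp n → EReal) {x x' : EucSp n} {s t : ℝ}
    (h : Metric.closedBall x s ⊆ Metric.closedBall x' t) : ballSup u x s ≤ ballSup u x' t :=
  sSup_le_sSup (image_mono h)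

lemma ballSup_ne_top {n : ℕ} {X : Set (EucSp n)} {u : EucSp n → EReal}
    (h1 : UpperSemicontinuousOn u X) (h2 : ∀ x ∈ X, u x < ⊤) {x : EucSp n} {t : ℝ} (ht : 0 < t)
    (hX : Metric.closedBall x t ⊆ X) : ballSup u x t ≠ ⊤ := by
  obtain ⟨z, hz, hm⟩ := (h1.mono hX).exists_isMaxOn ⟨x, by simp [ht.le]⟩ (isCompact_closedBall x t)
  refine ne_top_of_le_ne_top (h2 z (hX hz)).ne (sSup_le ?_)
  rintro _ ⟨y, hy, rfl⟩
  exact hm hy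

lemma ballSup_ne_bot {n : ℕ} {X : Set (EucSp n)} {u : EucSp n → EReal}
    (hne : ∀ y : EucSp n, ∀ r : ℝ, 0 < r → Metric.closedBall y r ⊆ X →
      ∃ x ∈ Metric.closedBall y r, u x ≠ ⊥) {x : EucSp n} {t : ℝ} (ht : 0 < t)
    (hX : Metric.closedBall x t ⊆ X) : ballSup u x t ≠ ⊥ := by
  obtain ⟨z, hz, hm⟩ := hne x t ht hX
  exact ne_bot_of_le_ne_bot hm (le_sSup ⟨z, hz, rfl⟩)

lemma three_points {n : ℕ} {p : ℝ} {F : Set (Matrix (Fin n) (Fin n) ℝ)}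
    (hF : IsConeSubequation F) (hchar : HasRieszChar F p)
    {X : Set (EucSp n)} {u : EucSp n → EReal} (hu : IsFSubharmonicOn F X u)
    (hne : ∀ y : EucSp n, ∀ r : ℝ, 0 < r → Metric.closedBall y r ⊆ X →
      ∃ x ∈ Metric.closedBall y r, u x ≠ ⊥)
    (x : EucSp n) (r s t : ℝ) (hr : 0 < r) (hrs : r < s) (hst : s < t)
    (hX : Metric.closedBall x t ⊆ X) :
    ((ballSup u x s).toReal - (ballSup u x r).toReal) * (rieszKernel p t - rieszKernel p r) ≤
    ((ballSup u x t).toReal - (ballSup u x r).toReal) * (rieszKernel p s - rieszKernel p r) := by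
  have hs : 0 < s := hr.trans hrs
  have ht : 0 < t := hs.trans hst
  have hXs := (Metric.closedBall_subset_closedBall (x := x) hst.le).trans hX
  have hXr := (Metric.closedBall_subset_closedBall (x := x) hrs.le).trans hXs
  have real : ∀ q, 0 < q → Metric.closedBall x q ⊆ X →
      ballSup u x q = ((ballSup u x q).toReal : EReal) := fun q hq h =>
    (EReal.coe_toReal (ballSup_ne_top hu.1 hu.2.1 hq h) (ballSup_ne_bot hne hq h)).symm
  have er := real r hr hXr
  have es := real s hs hXs
  have et := real t ht hX
  set mr := (ballSup u x r).toReal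
  set ms := (ballSup u x s).toReal
  set mt := (ballSup u x t).toReal
  have hKrs := kernel_mono p hr hs hrs
  have hKst := kernel_mono p hs ht hst
  have hrs' : mr ≤ ms := by
    have := ballSup_mono u (Metric.closedBall_subset_closedBall (x := x) hrs.le)
    rw [er, es] at this; exact_mod_cast this
  have hst' : ms ≤ mt := by
    have := ballSup_mono u (Metric.closedBall_subset_closedBall (x := x) hst.le)
    rw [et, es] at this; exact_mod_cast this
  rcases eq_or_lt_of_le (hrs'.trans hst') with h | h
  · have : ms = mr := by linarith
    rw [this, ← h]; simp
  · have hKrt : 0 < rieszKernel p t - rieszKernel p r := by linarith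
    set b := (mt - mr) / (rieszKernel p t - rieszKernel p r) with hb
    have hbpos : 0 < b := div_pos (by linarith) hKrt
    have hbm : b * (rieszKernel p t - rieszKernel p r) = mt - mr := div_mul_cancel₀ _ hKrt.ne'
    set a := mr - b * rieszKernel p r with ha
    have har : a + b * rieszKernel p r = mr := by rw [ha]; ring
    have hat : a + b * rieszKernel p t = mt := by rw [ha]; linarith
    have hle : ballSup u x s ≤ ((a + b * rieszKernel p s : ℝ) : EReal) := by
      refine sSup_le ?_
      rintro _ ⟨y, hy, rfl⟩
      have hys : ‖y - x‖ ≤ s := by simpa [dist_eq_norm] using hy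
      rcases le_total ‖y - x‖ r with h1 | h1
      · have h2 : u y ≤ ballSup u x r := le_sSup ⟨y, by simpa [dist_eq_norm] using h1, rfl⟩
        rw [er] at h2
        refine h2.trans ?_
        rw [EReal.coe_le_coe_iff, ← har]
        nlinarith
      · refine (annulus_comparison' hF hchar hu x r t a b hr hbpos hX ?_ ?_ y h1
          (hys.trans hst.le)).trans ?_
        · intro z hz
          rw [har, ← er]
          exact le_sSup ⟨z, by simp [dist_eq_norm, hz], rfl⟩
        · intro z hz
          rw [hat, ← et]
          exact le_sSup ⟨z, by simp [dist_eq_norm, hz], rfl⟩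
        · rw [EReal.coe_le_coe_iff]
          have := (kernel_mono p).monotoneOn (show ‖y - x‖ ∈ Ioi (0 : ℝ) from hr.trans_le h1) hs hys
          nlinarith
    rw [es, EReal.coe_le_coe_iff] at hle
    have h1 : ms - mr ≤ b * (rieszKernel p s - rieszKernel p r) := by rw [← har]; linarith
    calc (ms - mr) * (rieszKernel p t - rieszKernel p r)
        ≤ (b * (rieszKernel p s - rieszKernel p r)) * (rieszKernel p t - rieszKernel p r) := by
          gcongr
      _ = _ := by rw [← hbm]; ring

/-- Existence and upper semicontinuity of the density `Θ^M(u, ·)` of an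
`F`-subharmonic function. -/
theorem stmt11 (n : ℕ) (hn : 1 ≤ n) (p : ℝ)
    (F : Set (Matrix (Fin n) (Fin n) ℝ))
    (hF : IsConeSubequation F) (hST : STInvariant F) (hchar : HasRieszChar F p)
    (X : Set (EucSp n)) (hX : IsOpen X)
    (u : EucSp n → EReal) (hu : IsFSubharmonicOn F X u)
    (hne : ∀ y : EucSp n, ∀ r : ℝ, 0 < r → Metric.closedBall y r ⊆ X →
      ∃ x ∈ Metric.closedBall y r, u x ≠ ⊥) :
    ∃ Θ : EucSp n → ℝ,
      (∀ x ∈ X, 0 ≤ Θ x ∧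
        ∀ ε : ℝ, 0 < ε → ∃ δ : ℝ, 0 < δ ∧ ∀ s t : ℝ, 0 < s → s < t → t < δ →
          |((ballSup u x t).toReal - (ballSup u x s).toReal) /
              (rieszKernel p t - rieszKernel p s) - Θ x| < ε) ∧
      UpperSemicontinuousOn Θ X := by
  set S : EucSp n → ℝ → ℝ → ℝ := fun x s t =>
    ((ballSup u x t).toReal - (ballSup u x s).toReal) /
      (rieszKernel p t - rieszKernel p s) with hS
  set V : EucSp n → Set ℝ := fun x =>
    {q | ∃ s t : ℝ, 0 < s ∧ s < t ∧ Metric.closedBall x t ⊆ X ∧ q = S x s t} with hV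
  have hmono : ∀ (x x' : EucSp n) (s t : ℝ), 0 < s → 0 < t → Metric.closedBall x' t ⊆ X →
      Metric.closedBall x s ⊆ Metric.closedBall x' t →
      (ballSup u x s).toReal ≤ (ballSup u x' t).toReal := by
    intro x x' s t hs ht h1 h2
    exact EReal.toReal_le_toReal (ballSup_mono u h2) (ballSup_ne_bot hne hs (h2.trans h1))
      (ballSup_ne_top hu.1 hu.2.1 ht h1)
  have hS0 : ∀ x s t, 0 < s → s < t → Metric.closedBall x t ⊆ X → 0 ≤ S x s t := by
    intro x s t hs hst h
    have h1 := kernel_mono p hs (hs.trans hst) hst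
    have h2 := hmono x x s t hs (hs.trans hst) h (Metric.closedBall_subset_closedBall hst.le)
    exact div_nonneg (by linarith) (by linarith)
  have hbdd : ∀ x, BddBelow (V x) := by
    intro x
    refine ⟨0, ?_⟩
    rintro _ ⟨s, t, hs, hst, h, rfl⟩
    exact hS0 x s t hs hst h
  have hnonempty : ∀ x ∈ X, (V x).Nonempty := by
    intro x hx
    obtain ⟨R, hR, hRX⟩ := Metric.nhds_basis_closedBall.mem_iff.1 (hX.mem_nhds hx)
    exact ⟨_, R / 2, R, by linarith, by linarith, hRX, rfl⟩
  have hslope : ∀ x r s t, 0 < r → r < s → s < t → Metric.closedBall x t ⊆ X →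
      S x r s ≤ S x s t := by
    intro x r s t hr hrs hst h
    have h3 := three_points hF hchar hu hne x r s t hr hrs hst h
    have h1 := kernel_mono p hr (hr.trans hrs) hrs
    have h2 := kernel_mono p (hr.trans hrs) ((hr.trans hrs).trans hst) hst
    simp only [hS]
    rw [div_le_div_iff₀ (by linarith) (by linarith)]
    linarith
  refine ⟨fun x => sInf (V x), fun x hx => ⟨?_, ?_⟩, ?_⟩
  · refine le_csInf (hnonempty x hx) ?_
    rintro _ ⟨s, t, hs, hst, h, rfl⟩
    exact hS0 x s t hs hst h
  · intro ε hε
    obtain ⟨_, ⟨s0, t0, hs0, hst0, h0, rfl⟩, hlt⟩ :=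
      exists_lt_of_csInf_lt (hnonempty x hx) (show sInf (V x) < sInf (V x) + ε by linarith)
    refine ⟨s0, hs0, fun s t hs hst ht => ?_⟩
    have hb0 := (Metric.closedBall_subset_closedBall (x := x) hst0.le).trans h0
    have hbt := (Metric.closedBall_subset_closedBall (x := x) ht.le).trans hb0
    have h1 : S x s t ≤ S x s0 t0 :=
      (hslope x s t s0 hs hst ht hb0).trans (hslope x t s0 t0 (hs.trans hst) ht hst0 h0)
    have h2 : sInf (V x) ≤ S x s t := csInf_le (hbdd x) ⟨s, t, hs, hst, hbt, rfl⟩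
    change |S x s t - sInf (V x)| < ε
    rw [abs_lt]; constructor <;> linarith
  · intro x hx y hy
    obtain ⟨_, ⟨s, t, hs, hst, h, rfl⟩, hlt⟩ := exists_lt_of_csInf_lt (hnonempty x hx) hy
    have ht := hs.trans hst
    -- slopes with shrunk denominators
    have hK := kernel_mono p hs ht hst
    have hc : ContinuousAt (fun d : ℝ => ((ballSup u x t).toReal - (ballSup u x s).toReal) /
        (rieszKernel p (t - d) - rieszKernel p (s + d))) 0 := by
      apply ContinuousAt.div continuousAt_const
      · apply ContinuousAt.sub
        · exact ContinuousAt.comp (x := (0 : ℝ)) (g := rieszKernel p) (f := fun d : ℝ => t - d)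
            (by simpa using kernel_cont p ht) (by fun_prop)
        · exact ContinuousAt.comp (x := (0 : ℝ)) (g := rieszKernel p) (f := fun d : ℝ => s + d)
            (by simpa using kernel_cont p hs) (by fun_prop)
      · simp only [sub_zero, add_zero]; linarith
    have hev : ∀ᶠ d : ℝ in 𝓝 0, ((ballSup u x t).toReal - (ballSup u x s).toReal) /
        (rieszKernel p (t - d) - rieszKernel p (s + d)) < y := by
      apply hc.eventually_lt_const
      simpa [hS] using hlt
    have hev2 : ∀ᶠ d : ℝ in 𝓝 0, d < (t - s) / 2 := gt_mem_nhds (by linarith)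
    have htend : Tendsto (fun x' : EucSp n => dist x' x) (𝓝[X] x) (𝓝 0) := by
      have : ContinuousAt (fun x' : EucSp n => dist x' x) x := by fun_prop
      have h' : Tendsto (fun x' : EucSp n => dist x' x) (𝓝 x) (𝓝 (dist x x)) := this
      rw [dist_self] at h'
      exact h'.mono_left nhdsWithin_le_nhds
    filter_upwards [htend.eventually hev, htend.eventually hev2] with x' h1 h2
    set d := dist x' x with hd
    have hd0 : 0 ≤ d := dist_nonneg
    have hsub1 : Metric.closedBall x' (t - d) ⊆ Metric.closedBall x t :=
      Metric.closedBall_subset_closedBall' (by linarith)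
    have hsub2 : Metric.closedBall x s ⊆ Metric.closedBall x' (s + d) :=
      Metric.closedBall_subset_closedBall' (by rw [dist_comm x x'])
    have hlt' : s + d < t - d := by linarith
    have hXt' := hsub1.trans h
    have hXs' := (Metric.closedBall_subset_closedBall (x := x') hlt'.le).trans hXt'
    refine lt_of_le_of_lt (csInf_le (hbdd x')
      ⟨s + d, t - d, by linarith, hlt', hXt', rfl⟩) (lt_of_le_of_lt ?_ h1)
    have hKd := kernel_mono p (show s + d ∈ Ioi (0 : ℝ) from by simp; linarith)
      (show t - d ∈ Ioi (0 : ℝ) from by simp; linarith) hlt'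
    have a1 := hmono x' x (t - d) t (by linarith) ht h hsub1
    have a2 := hmono x x' s (s + d) hs (by linarith) hXs' hsub2
    simp only [hS]
    apply div_le_div_of_nonneg_right _ (by linarith)
    linarith

end
end
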